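/- Let d ≥ 2, let Ω ⊆ ℝ^N (N ≥ 1) be an open set, let n : Ω → S^{d-1} be measurable and let ρ : (0,∞) → [0,∞) be measurable. Then (with all integrals valued in [0,∞]): ∫_{SO(d)} ∬_{Ω×Ω} ‖F_R(n(x)) − F_R(n(y))‖_{ℝ^d} / |x−y| · ρ(|x−y|) dx dy dμ(R) ≤ (1 + 2/π) ∬_{Ω×Ω} (1/√2)·‖n(x)⊗n(x) − n(y)⊗n(y)‖ / |x−y| · ρ(|x−y|) dx dy, where ‖·‖ on matrices is the Frobenius norm. -/

import Mathlib

/-!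
STATEMENT 8: the Euclidean-distance analogue of Lemma 3.1 (used in the first proof of
Proposition 1.9): the SO(d)-average of the mollified Euclidean energies of the liftings
`F_R ∘ n` is at most (1 + 2/π) times the mollified energy of the tensorial map
`x ↦ (1/√2) n(x)⊗n(x)`.
-/

noncomputable section
open MeasureTheory Real Filter
open scoped ENNReal RealInnerProductSpace

instance {m n : Type*} : MeasurableSpace (Matrix m n ℝ) := MeasurableSpace.pi

/-- The special orthogonal group `SO(d)` as matrices. -/
abbrev SOd (d : ℕ) := Matrix.specialOrthogonalGroup (Fin d) ℝ

/-- The last coordinate `⟪x, e_d⟫` of a vector `x ∈ ℝ^d`. -/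
def lastCoord {d : ℕ} (x : EuclideanSpace ℝ (Fin d)) : ℝ :=
  if h : 0 < d then x ⟨d - 1, Nat.sub_lt h Nat.one_pos⟩ else 0

/-- `F : S^{d-1} → S^{d-1}`, `F(x) = x` if `⟪x, e_d⟫ ≥ 0` and `F(x) = -x` otherwise. -/
def Fsym {d : ℕ} (x : EuclideanSpace ℝ (Fin d)) : EuclideanSpace ℝ (Fin d) :=
  if 0 ≤ lastCoord x then x else -x

/-- Action of a matrix on `ℝ^d` (Euclidean space) by matrix-vector multiplication. -/
def rotAct {d : ℕ} (R : Matrix (Fin d) (Fin d) ℝ) (x : EuclideanSpace ℝ (Fin d)) :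
    EuclideanSpace ℝ (Fin d) :=
  (EuclideanSpace.equiv (Fin d) ℝ).symm (R.mulVec (EuclideanSpace.equiv (Fin d) ℝ x))

/-- Action of `R ∈ SO(d)` on `ℝ^d`. -/
def rot {d : ℕ} (R : SOd d) (x : EuclideanSpace ℝ (Fin d)) : EuclideanSpace ℝ (Fin d) :=
  rotAct (R : Matrix (Fin d) (Fin d) ℝ) x

/-- `F_R(x) = R⁻¹ F(Rx)` (for `R ∈ SO(d)`, `R⁻¹ = Rᵀ`). -/
def FR {d : ℕ} (R : SOd d) (x : EuclideanSpace ℝ (Fin d)) : EuclideanSpace ℝ (Fin d) :=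
  rotAct (Matrix.transpose (R : Matrix (Fin d) (Fin d) ℝ)) (Fsym (rot R x))

/-- The Frobenius (Euclidean) norm of a `d × d` real matrix. -/
def frobNorm {d : ℕ} (A : Fin d → Fin d → ℝ) : ℝ := Real.sqrt (∑ i, ∑ j, (A i j) ^ 2)

/-- The tensor (outer) product `v ⊗ w` of two vectors, as a `d × d` matrix. -/
def outer {d : ℕ} (v w : EuclideanSpace ℝ (Fin d)) : Fin d → Fin d → ℝ := fun i j => v i * w j

/-!
The map `F_R` picks from `±x` the representative in the half-space `0 ≤ ⟪R⁻¹ e_d, ·⟫`, so for unit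
vectors `‖F_R x - F_R y‖` is `‖x + y‖` if the hyperplane orthogonal to `R⁻¹ e_d` separates `x` and
`y`, and `‖x - y‖` for almost every other `R`. If `θ` is the angle between `x` and `y`, the
separation probability is `θ / π`: by invariance it does not change when `x` and `y` are rotated in
the plane they span, and a fixed generic hyperplane separates the rotated pair for a set of rotation
angles of length `θ` in each half turn. Since `‖x - y‖ = 2 sin (θ / 2)`, `‖x + y‖ = 2 cos (θ / 2)`
and the tensorial distance is `sin θ`, everything reduces to
`(1 - θ / π) * 2 sin (θ / 2) + θ / π * 2 cos (θ / 2) ≤ (1 + 2 / π) * sin θ`. Divided by `sin θ`,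
this is `2 / π` times the sum of the chord bounds `t / sin t ≤ 1 + (1 - 2 / π) t` for the convex
function `t / sin t` on `[0, π / 2]` at `t = θ / 2` and at `t = π / 2 - θ / 2`.
-/

theorem cos_two_mul_add_lt_iff {θ β φ : ℝ} (hθ₀ : 0 ≤ θ) (hθπ : θ ≤ π)
    (hφ : |φ + β / 2| ≤ π / 2) :
    cos (2 * φ + β) < -cos θ ↔ (π - θ) / 2 < |φ + β / 2| := by
  have hφ_cos : cos (2 * φ + β) = cos (2 * |φ + β / 2|) := by
    rw [← cos_abs, show 2 * φ + β = 2 * (φ + β / 2) by ring, abs_mul, abs_two]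
  rw [hφ_cos, ← cos_pi_sub, strictAntiOn_cos.lt_iff_gt ⟨by positivity, by linarith⟩
    ⟨by linarith, by linarith⟩]
  constructor <;> intro h <;> linarith

theorem volume_inter_Ioc_add_eq_of_periodic {T : ℝ} (hT : 0 < T) {A : Set ℝ}
    (hA : MeasurableSet A) (hper : Function.Periodic (· ∈ A) T) (a b : ℝ) :
    volume (A ∩ Set.Ioc a (a + T)) = volume (A ∩ Set.Ioc b (b + T)) := by
  refine (isAddFundamentalDomain_Ioc hT a volume).measure_set_eq
    (isAddFundamentalDomain_Ioc hT b volume) hA fun ⟨_, k, hk⟩ => ?_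
  ext x
  subst hk
  rw [Set.mem_preimage, AddSubgroup.vadd_def, vadd_eq_add, add_comm]
  exact (hper.zsmul k x).to_iff

theorem volume_cos_two_mul_add_lt {θ : ℝ} (hθ₀ : 0 ≤ θ) (hθπ : θ ≤ π) (β a : ℝ) :
    volume ({φ | cos (2 * φ + β) < -cos θ} ∩ Set.Ioc a (a + π)) = ENNReal.ofReal θ := by
  have hmeas : MeasurableSet {φ | cos (2 * φ + β) < -cos θ} :=
    measurableSet_lt (by fun_prop) measurable_const
  have hper : Function.Periodic (· ∈ {φ | cos (2 * φ + β) < -cos θ}) π := fun φ => by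
    have hshift : 2 * (φ + π) + β = 2 * φ + β + 2 * π := by ring
    simp only [Set.mem_ofPred_eq, hshift, cos_add_two_pi]
  -- On the half turn centred at `-β / 2` the condition is `(π - θ) / 2 < |φ + β / 2|`.
  obtain ⟨b, hb⟩ : ∃ b, b = -(π / 2) - β / 2 := ⟨_, rfl⟩
  have hwindow : {φ | cos (2 * φ + β) < -cos θ} ∩ Set.Ioc b (b + π) =
      Set.Ioo b (b + θ / 2) ∪ Set.Ioc (b + π - θ / 2) (b + π) := by
    ext φ
    rw [Set.inter_comm, Set.mem_inter_iff, Set.mem_union, Set.mem_Ioo, Set.mem_Ioc, Set.mem_Ioc]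
    constructor
    · rintro ⟨⟨hbφ, hφb⟩, hφ⟩
      rw [Set.mem_ofPred_eq, cos_two_mul_add_lt_iff hθ₀ hθπ
        (abs_le.2 ⟨by linarith, by linarith⟩), lt_abs] at hφ
      exact hφ.symm.imp (fun h => ⟨hbφ, by linarith⟩) fun h => ⟨by linarith, hφb⟩
    · intro hφ
      have hφ' : b < φ ∧ φ ≤ b + π := by
        rcases hφ with h | h <;> constructor <;> linarith
      rw [Set.mem_ofPred_eq, cos_two_mul_add_lt_iff hθ₀ hθπ
        (abs_le.2 ⟨by linarith, by linarith⟩), lt_abs]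
      exact ⟨hφ', hφ.symm.imp (fun h => by linarith) fun h => by linarith⟩
  have hdisjoint : Disjoint (Set.Ioo b (b + θ / 2)) (Set.Ioc (b + π - θ / 2) (b + π)) :=
    Set.disjoint_left.2 fun φ h₁ h₂ => by linarith [h₁.2, h₂.1]
  rw [volume_inter_Ioc_add_eq_of_periodic pi_pos hmeas hper a b, hwindow,
    measure_union hdisjoint measurableSet_Ioc, Real.volume_Ioo, Real.volume_Ioc,
    ← ENNReal.ofReal_add (by linarith) (by linarith)]
  congr 1
  ring

theorem exists_amplitude_phase {s : ℝ} (hs : s ≠ 0) (t : ℝ) :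
    ∃ l α : ℝ, 0 < l ∧ ∀ φ, cos φ * s + sin φ * t = l * cos (φ - α) := by
  set z : ℂ := ⟨s, t⟩
  have hz₀ : z ≠ 0 := fun h => hs (congrArg Complex.re h)
  refine ⟨‖z‖, z.arg, norm_pos_iff.2 hz₀, fun φ => ?_⟩
  linear_combination (-cos φ) * z.norm_mul_cos_arg - sin φ * z.norm_mul_sin_arg -
    ‖z‖ * cos_sub φ z.arg

theorem le_sin_mul_of_le_one {x : ℝ} (h₀ : 0 ≤ x) (h₁ : x ≤ 1) :
    x ≤ sin x * (1 + (1 - 2 / π) * x) := by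
  have hslope : 1 / 3 ≤ 1 - 2 / π := by
    have := div_le_div_of_nonneg_left zero_le_two three_pos pi_gt_three.le
    linarith
  have hfactor : 0 ≤ (1 - 2 / π) * (1 - x ^ 2 / 6) - x / 6 := by
    nlinarith [mul_le_mul hslope (show 5 / 6 ≤ 1 - x ^ 2 / 6 by nlinarith) (by norm_num)
      (by linarith)]
  calc x
    _ ≤ (x - x ^ 3 / 6) * (1 + (1 - 2 / π) * x) := by nlinarith [mul_nonneg (sq_nonneg x) hfactor]
    _ ≤ sin x * (1 + (1 - 2 / π) * x) :=
      mul_le_mul_of_nonneg_right (sin_ge_sub_cube h₀) (by positivity)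

theorem le_sin_mul_of_one_le {x : ℝ} (h₁ : 1 ≤ x) (h₂ : x ≤ π / 2) :
    x ≤ sin x * (1 + (1 - 2 / π) * x) := by
  have hslope : 0 ≤ 1 - 2 / π := by
    rw [sub_nonneg, div_le_one pi_pos]; exact two_le_pi
  obtain ⟨y, rfl⟩ : ∃ y, x = π / 2 - y := ⟨π / 2 - x, by ring⟩
  have hfactor : 0 ≤ 2 / π - π / 4 * y + (1 - 2 / π) * y ^ 2 / 2 := by
    have : π / 4 * y ≤ 2 / π := by
      rw [le_div_iff₀ pi_pos]
      have : π * y ≤ 2 := by nlinarith [pi_gt_three, pi_lt_d2]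
      nlinarith [pi_gt_three, pi_lt_d2]
    have : 0 ≤ (1 - 2 / π) * y ^ 2 / 2 := by positivity
    linarith
  rw [sin_pi_div_two_sub]
  calc π / 2 - y
      ≤ π / 2 - y + y * (2 / π - π / 4 * y + (1 - 2 / π) * y ^ 2 / 2) :=
        le_add_of_nonneg_right (mul_nonneg (by linarith) hfactor)
    _ = (1 - y ^ 2 / 2) * (1 + (1 - 2 / π) * (π / 2 - y)) := by field_simp; ring
    _ ≤ cos y * (1 + (1 - 2 / π) * (π / 2 - y)) :=
      mul_le_mul_of_nonneg_right one_sub_sq_div_two_le_cos (by positivity)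

theorem le_sin_mul {x : ℝ} (h₀ : 0 ≤ x) (h₁ : x ≤ π / 2) :
    x ≤ sin x * (1 + (1 - 2 / π) * x) := by
  rcases le_total x 1 with hx | hx
  · exact le_sin_mul_of_le_one h₀ hx
  · exact le_sin_mul_of_one_le hx h₁

theorem half_angle_average_le {θ : ℝ} (hθ₀ : 0 ≤ θ) (hθπ : θ ≤ π) :
    (1 - θ / π) * (2 * sin (θ / 2)) + θ / π * (2 * cos (θ / 2)) ≤ (1 + 2 / π) * sin θ := by
  have hsin₀ : 0 ≤ sin (θ / 2) := sin_nonneg_of_nonneg_of_le_pi (by linarith) (by linarith)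
  have hcos₀ : 0 ≤ cos (θ / 2) := cos_nonneg_of_neg_pi_div_two_le_of_le (by linarith) (by linarith)
  have hsin := le_sin_mul (x := θ / 2) (by linarith) (by linarith)
  have hcos := le_sin_mul (x := π / 2 - θ / 2) (by linarith) (by linarith)
  rw [sin_pi_div_two_sub] at hcos
  have hθ : sin θ = 2 * sin (θ / 2) * cos (θ / 2) := by rw [← sin_two_mul]; ring_nf
  calc (1 - θ / π) * (2 * sin (θ / 2)) + θ / π * (2 * cos (θ / 2))
      = 4 / π * ((π / 2 - θ / 2) * sin (θ / 2) + θ / 2 * cos (θ / 2)) := by field_simp; ring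
    _ ≤ 4 / π * (cos (θ / 2) * (1 + (1 - 2 / π) * (π / 2 - θ / 2)) * sin (θ / 2) +
          sin (θ / 2) * (1 + (1 - 2 / π) * (θ / 2)) * cos (θ / 2)) := by gcongr
    _ = (1 + 2 / π) * sin θ := by rw [hθ]; field_simp; ring

section InnerProductSpace

variable {E : Type*} [NormedAddCommGroup E] [InnerProductSpace ℝ E]

/-- The point at angle `φ` on the unit circle spanned by two orthogonal unit vectors `u`, `v`. -/
def arc (u v : E) (φ : ℝ) : E := cos φ • u + sin φ • v

theorem arc_zero (u v : E) : arc u v 0 = u := by simp [arc]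

theorem measurable_arc [MeasurableSpace E] [BorelSpace E] (u v : E) : Measurable (arc u v) := by
  have : Continuous (arc u v) := by unfold arc; fun_prop
  exact this.measurable

theorem exists_unit_orthogonal_smul_eq (hE : 1 < Module.finrank ℝ E) {x w : E}
    (hxw : ⟪x, w⟫ = 0) : ∃ v : E, ‖v‖ = 1 ∧ ⟪x, v⟫ = 0 ∧ w = ‖w‖ • v := by
  by_cases hw : w = 0
  · have hspan : (ℝ ∙ x)ᗮ ≠ ⊥ := fun h => by
      have hle := finrank_span_le_card (R := ℝ) ({x} : Set E)
      rw [Submodule.orthogonal_eq_bot_iff.1 h, finrank_top] at hle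
      simp at hle
      omega
    obtain ⟨z, hz, hz₀⟩ := Submodule.exists_mem_ne_zero_of_ne_bot hspan
    refine ⟨‖z‖⁻¹ • z, norm_smul_inv_norm hz₀, ?_, by simp [hw]⟩
    rw [inner_smul_right, Submodule.mem_orthogonal_singleton_iff_inner_right.1 hz, mul_zero]
  · refine ⟨‖w‖⁻¹ • w, norm_smul_inv_norm hw, by rw [inner_smul_right, hxw, mul_zero], ?_⟩
    rw [smul_inv_smul₀ (norm_ne_zero_iff.2 hw)]

theorem exists_eq_arc_angle (hE : 1 < Module.finrank ℝ E) {x y : E} (hx : ‖x‖ = 1)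
    (hy : ‖y‖ = 1) : ∃ v : E, ‖v‖ = 1 ∧ ⟪x, v⟫ = 0 ∧
      y = arc x v (InnerProductGeometry.angle x y) := by
  set θ := InnerProductGeometry.angle x y
  have hxy : ⟪x, y⟫ = cos θ := by
    rw [← InnerProductGeometry.cos_angle_mul_norm_mul_norm, hx, hy, one_mul, mul_one]
  have horth : ⟪x, y - cos θ • x⟫ = 0 := by
    rw [inner_sub_right, inner_smul_right, real_inner_self_eq_norm_sq, hx, hxy]
    ring
  have hnorm : ‖y - cos θ • x‖ = sin θ := by
    rw [← sq_eq_sq₀ (norm_nonneg _) (InnerProductGeometry.sin_angle_nonneg x y),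
      norm_sub_sq_real, inner_smul_right, real_inner_comm, norm_smul, hx, hy, hxy, mul_one,
      norm_eq_abs, sq_abs, sin_sq]
    ring
  obtain ⟨v, hv, hxv, hv_eq⟩ := exists_unit_orthogonal_smul_eq hE horth
  refine ⟨v, hv, hxv, ?_⟩
  rw [arc, ← hnorm, ← hv_eq, add_sub_cancel]

theorem norm_sub_eq_two_mul_sin_half_angle {x y : E} (hx : ‖x‖ = 1) (hy : ‖y‖ = 1) :
    ‖x - y‖ = 2 * sin (InnerProductGeometry.angle x y / 2) := by
  set θ := InnerProductGeometry.angle x y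
  have hθ₀ : 0 ≤ θ := InnerProductGeometry.angle_nonneg x y
  have hθπ : θ ≤ π := InnerProductGeometry.angle_le_pi x y
  have hsin : 0 ≤ sin (θ / 2) := sin_nonneg_of_nonneg_of_le_pi (by linarith) (by linarith)
  have hcos : cos θ = 1 - 2 * sin (θ / 2) ^ 2 := by
    rw [← cos_two_mul_eq_one_sub]; ring_nf
  rw [← sq_eq_sq₀ (norm_nonneg _) (by positivity), norm_sub_sq_real,
    ← InnerProductGeometry.cos_angle_mul_norm_mul_norm, hx, hy, hcos]
  ring

theorem norm_add_eq_two_mul_cos_half_angle {x y : E} (hx : ‖x‖ = 1) (hy : ‖y‖ = 1) :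
    ‖x + y‖ = 2 * cos (InnerProductGeometry.angle x y / 2) := by
  rw [← sub_neg_eq_add, norm_sub_eq_two_mul_sin_half_angle hx (by rwa [norm_neg]),
    InnerProductGeometry.angle_neg_right, sub_div, sin_pi_div_two_sub]

/-- The vectors `x` and `y` lie strictly on opposite sides of the hyperplane `pᗮ`. -/
def Separates (p x y : E) : Prop := ⟪p, x⟫ * ⟪p, y⟫ < 0

theorem measurableSet_separates {α : Type*} [MeasurableSpace α] [MeasurableSpace E] [BorelSpace E]
    [SecondCountableTopology E] {p x y : α → E} (hp : Measurable p) (hx : Measurable x)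
    (hy : Measurable y) : MeasurableSet {a | Separates (p a) (x a) (y a)} :=
  measurableSet_lt ((hp.inner hx).mul (hp.inner hy)) measurable_const

theorem volume_separates_arc {p u : E} (hpu : ⟪p, u⟫ ≠ 0) (v : E) {θ : ℝ} (hθ₀ : 0 ≤ θ)
    (hθπ : θ ≤ π) :
    volume ({φ | Separates p (arc u v φ) (arc u v (θ + φ))} ∩ Set.Ioc 0 π) =
      ENNReal.ofReal θ := by
  obtain ⟨l, α, hl, hphase⟩ := exists_amplitude_phase hpu ⟪p, v⟫
  have harc (φ : ℝ) : ⟪p, arc u v φ⟫ = l * cos (φ - α) := by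
    rw [← hphase, arc, inner_add_right, inner_smul_right, inner_smul_right]
  have hproduct (φ : ℝ) : ⟪p, arc u v φ⟫ * ⟪p, arc u v (θ + φ)⟫ =
      l ^ 2 / 2 * (cos (2 * φ + (θ - 2 * α)) + cos θ) := by
    rw [harc, harc, cos_add_cos]
    ring_nf
  have hset : {φ | Separates p (arc u v φ) (arc u v (θ + φ))} =
      {φ | cos (2 * φ + (θ - 2 * α)) < -cos θ} := by
    ext φ
    rw [Set.mem_ofPred_eq, Set.mem_ofPred_eq, Separates, hproduct,
      ← smul_eq_mul, smul_neg_iff_of_pos_left (by positivity), ← lt_neg_iff_add_neg]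
  rw [hset]
  simpa only [zero_add] using volume_cos_two_mul_add_lt hθ₀ hθπ (θ - 2 * α) 0

/-- The representative of the pair `±x` in the closed half-space `0 ≤ ⟪p, ·⟫`; on `pᗮ`, where both
qualify, it is `x` itself. -/
def hemisphereFlip (p x : E) : E := if 0 ≤ ⟪p, x⟫ then x else -x

theorem measurable_hemisphereFlip [MeasurableSpace E] [BorelSpace E] [SecondCountableTopology E] :
    Measurable fun q : E × E => hemisphereFlip q.1 q.2 :=
  Measurable.ite (measurableSet_le measurable_const (measurable_fst.inner measurable_snd))
    measurable_snd measurable_snd.neg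

theorem norm_hemisphereFlip_sub_of_separates {p x y : E} (h : Separates p x y) :
    ‖hemisphereFlip p x - hemisphereFlip p y‖ = ‖x + y‖ := by
  rcases mul_neg_iff.1 h with ⟨hx, hy⟩ | ⟨hx, hy⟩
  · rw [hemisphereFlip, hemisphereFlip, if_pos hx.le, if_neg hy.not_ge, sub_neg_eq_add]
  · rw [hemisphereFlip, hemisphereFlip, if_neg hx.not_ge, if_pos hy.le, ← neg_add', norm_neg]

theorem norm_hemisphereFlip_sub_of_not_separates {p x y : E} (hx : ⟪p, x⟫ ≠ 0) (hy : ⟪p, y⟫ ≠ 0)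
    (h : ¬Separates p x y) : ‖hemisphereFlip p x - hemisphereFlip p y‖ = ‖x - y‖ := by
  have hpos : 0 < ⟪p, x⟫ * ⟪p, y⟫ := (not_lt.1 h).lt_of_ne' (mul_ne_zero hx hy)
  rcases mul_pos_iff.1 hpos with ⟨hx, hy⟩ | ⟨hx, hy⟩
  · rw [hemisphereFlip, hemisphereFlip, if_pos hx.le, if_pos hy.le]
  · rw [hemisphereFlip, hemisphereFlip, if_neg hx.not_ge, if_neg hy.not_ge, neg_sub_neg,
      norm_sub_rev]

end InnerProductSpace

section Rotation

variable {d : ℕ}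

theorem rotAct_eq_toEuclideanLin (A : Matrix (Fin d) (Fin d) ℝ) (x : EuclideanSpace ℝ (Fin d)) :
    rotAct A x = Matrix.toEuclideanLin A x := rfl

theorem rotAct_mul (A B : Matrix (Fin d) (Fin d) ℝ) (x : EuclideanSpace ℝ (Fin d)) :
    rotAct (A * B) x = rotAct A (rotAct B x) := by
  simp only [rotAct_eq_toEuclideanLin, Matrix.toLpLin_mul_same, LinearMap.comp_apply]

theorem rotAct_one (x : EuclideanSpace ℝ (Fin d)) : rotAct 1 x = x := by
  simp only [rotAct_eq_toEuclideanLin, Matrix.toLpLin_one, LinearMap.id_apply]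

theorem inner_rotAct_transpose (A : Matrix (Fin d) (Fin d) ℝ) (x y : EuclideanSpace ℝ (Fin d)) :
    ⟪rotAct A.transpose x, y⟫ = ⟪x, rotAct A y⟫ := by
  rw [← Matrix.conjTranspose_eq_transpose_of_trivial, rotAct_eq_toEuclideanLin,
    Matrix.toEuclideanLin_conjTranspose_eq_adjoint, LinearMap.adjoint_inner_left,
    rotAct_eq_toEuclideanLin]

theorem rotAct_transpose_rot (R : SOd d) (x : EuclideanSpace ℝ (Fin d)) :
    rotAct (R : Matrix (Fin d) (Fin d) ℝ).transpose (rot R x) = x := by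
  have hR := (Matrix.mem_specialOrthogonalGroup_iff.1 R.2).1
  rw [Matrix.mem_orthogonalGroup_iff'] at hR
  rw [rot, ← rotAct_mul]
  exact hR ▸ rotAct_one x

theorem rot_mul (R S : SOd d) (x : EuclideanSpace ℝ (Fin d)) : rot (R * S) x = rot R (rot S x) :=
  rotAct_mul _ _ x

theorem dotProduct_eq_inner (x y : EuclideanSpace ℝ (Fin d)) : x.ofLp ⬝ᵥ y.ofLp = ⟪x, y⟫ := by
  rw [EuclideanSpace.inner_eq_star_dotProduct, star_trivial, dotProduct_comm]

/-- The rotation by the angle `φ` in the oriented plane spanned by two orthogonal unit vectors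
`u`, `v`, extended by the identity on the orthogonal complement of that plane. -/
def planeRotation (u v : EuclideanSpace ℝ (Fin d)) (φ : ℝ) : Matrix (Fin d) (Fin d) ℝ :=
  1 + (cos φ - 1) • (Matrix.vecMulVec u u + Matrix.vecMulVec v v) +
    sin φ • (Matrix.vecMulVec v u - Matrix.vecMulVec u v)

theorem planeRotation_zero (u v : EuclideanSpace ℝ (Fin d)) : planeRotation u v 0 = 1 := by
  simp [planeRotation]

theorem planeRotation_transpose (u v : EuclideanSpace ℝ (Fin d)) (φ : ℝ) :
    (planeRotation u v φ).transpose = planeRotation u v (-φ) := by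
  simp only [planeRotation, Matrix.transpose_add, Matrix.transpose_smul, Matrix.transpose_sub,
    Matrix.transpose_one, Matrix.transpose_vecMulVec, cos_neg, sin_neg]
  module

theorem rotAct_planeRotation (u v : EuclideanSpace ℝ (Fin d)) (φ : ℝ)
    (x : EuclideanSpace ℝ (Fin d)) :
    rotAct (planeRotation u v φ) x = x + (cos φ - 1) • (⟪u, x⟫ • u + ⟪v, x⟫ • v) +
      sin φ • (⟪u, x⟫ • v - ⟪v, x⟫ • u) := by
  ext i
  simp only [rotAct_eq_toEuclideanLin, Matrix.ofLp_toLpLin, Matrix.toLin'_apply, planeRotation,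
    Matrix.add_mulVec, Matrix.sub_mulVec, Matrix.smul_mulVec, Matrix.one_mulVec,
    Matrix.vecMulVec_mulVec, dotProduct_eq_inner]
  simp

variable {u v : EuclideanSpace ℝ (Fin d)}

theorem planeRotation_mul (hu : ‖u‖ = 1) (hv : ‖v‖ = 1) (huv : ⟪u, v⟫ = 0) (φ ψ : ℝ) :
    planeRotation u v φ * planeRotation u v ψ = planeRotation u v (φ + ψ) := by
  have huu : u.ofLp ⬝ᵥ u.ofLp = 1 := by
    rw [dotProduct_eq_inner, real_inner_self_eq_norm_sq, hu, one_pow]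
  have hvv : v.ofLp ⬝ᵥ v.ofLp = 1 := by
    rw [dotProduct_eq_inner, real_inner_self_eq_norm_sq, hv, one_pow]
  have huv' : u.ofLp ⬝ᵥ v.ofLp = 0 := by rw [dotProduct_eq_inner, huv]
  have hvu : v.ofLp ⬝ᵥ u.ofLp = 0 := by rw [dotProduct_comm, huv']
  simp only [planeRotation, mul_add, add_mul, mul_sub, sub_mul, Matrix.smul_mul, Matrix.mul_smul,
    one_mul, mul_one, Matrix.vecMulVec_mul_vecMulVec, huu, hvv, huv', hvu, one_smul, zero_smul,
    Matrix.vecMulVec_zero, cos_add, sin_add]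
  module

theorem rotAct_planeRotation_arc (hu : ‖u‖ = 1) (hv : ‖v‖ = 1) (huv : ⟪u, v⟫ = 0) (φ ψ : ℝ) :
    rotAct (planeRotation u v φ) (arc u v ψ) = arc u v (ψ + φ) := by
  have huu : ⟪u, arc u v ψ⟫ = cos ψ := by
    simp [arc, inner_add_right, inner_smul_right, huv, hu]
  have hvv : ⟪v, arc u v ψ⟫ = sin ψ := by
    simp [arc, inner_add_right, inner_smul_right, real_inner_comm, huv, hv]
  rw [rotAct_planeRotation, huu, hvv, arc, arc, cos_add, sin_add]
  module

theorem planeRotation_mem_specialOrthogonalGroup (hu : ‖u‖ = 1) (hv : ‖v‖ = 1)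
    (huv : ⟪u, v⟫ = 0) (φ : ℝ) :
    planeRotation u v φ ∈ Matrix.specialOrthogonalGroup (Fin d) ℝ := by
  have horthogonal (ψ : ℝ) : planeRotation u v ψ * (planeRotation u v ψ).transpose = 1 := by
    rw [planeRotation_transpose, planeRotation_mul hu hv huv, add_neg_cancel, planeRotation_zero]
  refine Matrix.mem_specialOrthogonalGroup_iff.2
    ⟨(Matrix.mem_orthogonalGroup_iff _ _).2 (horthogonal φ), ?_⟩
  -- A rotation is the square of the rotation by half its angle, so its determinant is a square.
  have hdet := congrArg Matrix.det (horthogonal (φ / 2))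
  rwa [Matrix.det_mul, Matrix.det_transpose, ← Matrix.det_mul, planeRotation_mul hu hv huv,
    add_halves, Matrix.det_one] at hdet

theorem exists_rot_arc_eq (hu : ‖u‖ = 1) (hv : ‖v‖ = 1) (huv : ⟪u, v⟫ = 0) (φ : ℝ) :
    ∃ S : SOd d, ∀ ψ, rot S (arc u v ψ) = arc u v (ψ + φ) :=
  ⟨⟨planeRotation u v φ, planeRotation_mem_specialOrthogonalGroup hu hv huv φ⟩,
    rotAct_planeRotation_arc hu hv huv φ⟩

theorem exists_rot_eq (hd : 2 ≤ d) (hu : ‖u‖ = 1) (hv : ‖v‖ = 1) : ∃ S : SOd d, rot S u = v := by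
  obtain ⟨w, hw, huw, hv_eq⟩ := exists_eq_arc_angle (by rwa [finrank_euclideanSpace_fin]) hu hv
  obtain ⟨S, hS⟩ := exists_rot_arc_eq hu hw huw (InnerProductGeometry.angle u v)
  refine ⟨S, ?_⟩
  conv_lhs => rw [← arc_zero u w]
  rw [hS, zero_add, ← hv_eq]

end Rotation

section Pole

variable {d : ℕ}

/-- The last basis vector `e_d` (and `0` in dimension `0`, like `lastCoord`). -/
def northPole (d : ℕ) : EuclideanSpace ℝ (Fin d) :=
  if h : 0 < d then EuclideanSpace.single ⟨d - 1, Nat.sub_lt h Nat.one_pos⟩ 1 else 0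

theorem inner_northPole (x : EuclideanSpace ℝ (Fin d)) : ⟪northPole d, x⟫ = lastCoord x := by
  unfold northPole lastCoord
  split_ifs
  · simp [EuclideanSpace.inner_single_left]
  · exact inner_zero_left x

theorem northPole_ne_zero (hd : 0 < d) : northPole d ≠ 0 := by
  simp [northPole, hd]

/-- The vector `R⁻¹ e_d`: the map `F_R` reflects into the half-space `0 ≤ ⟪R⁻¹ e_d, ·⟫`. -/
def pole (R : SOd d) : EuclideanSpace ℝ (Fin d) :=
  rotAct (R : Matrix (Fin d) (Fin d) ℝ).transpose (northPole d)

theorem inner_pole (R : SOd d) (x : EuclideanSpace ℝ (Fin d)) :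
    ⟪pole R, x⟫ = lastCoord (rot R x) := by
  rw [pole, inner_rotAct_transpose, inner_northPole, rot]

theorem inner_pole_mul (R S : SOd d) (x : EuclideanSpace ℝ (Fin d)) :
    ⟪pole (R * S), x⟫ = ⟪pole R, rot S x⟫ := by
  rw [inner_pole, inner_pole, rot_mul]

theorem separates_pole_mul (R S : SOd d) (x y : EuclideanSpace ℝ (Fin d)) :
    Separates (pole (R * S)) x y ↔ Separates (pole R) (rot S x) (rot S y) := by
  rw [Separates, Separates, inner_pole_mul, inner_pole_mul]

theorem pole_ne_zero (hd : 0 < d) (R : SOd d) : pole R ≠ 0 := by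
  intro hR
  have hone : pole (1 : SOd d) = northPole d := by
    simp [pole, rotAct_one]
  have hinner := inner_pole_mul R R⁻¹ (northPole d)
  rw [mul_inv_cancel, hone, hR, inner_zero_left, inner_self_eq_zero] at hinner
  exact northPole_ne_zero hd hinner

theorem FR_eq_hemisphereFlip (R : SOd d) (x : EuclideanSpace ℝ (Fin d)) :
    FR R x = hemisphereFlip (pole R) x := by
  rw [FR, Fsym, hemisphereFlip, inner_pole]
  split_ifs
  · exact rotAct_transpose_rot R x
  · rw [rotAct_eq_toEuclideanLin, map_neg, ← rotAct_eq_toEuclideanLin, rotAct_transpose_rot]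

theorem measurable_SOd_apply (i j : Fin d) :
    Measurable fun R : SOd d => (R : Matrix (Fin d) (Fin d) ℝ) i j :=
  (measurable_pi_apply j).comp ((measurable_pi_apply (X := fun _ => Fin d → ℝ) i).comp
    measurable_subtype_coe)

theorem measurable_pole : Measurable (pole : SOd d → EuclideanSpace ℝ (Fin d)) := by
  refine (WithLp.measurable_toLp 2 _).comp (measurable_pi_lambda _ fun i => ?_)
  simp only [Matrix.mulVec, dotProduct, Matrix.transpose_apply]
  exact Finset.measurable_sum _ fun j _ => (measurable_SOd_apply j i).mul_const _

instance instMeasurableMulSOd : MeasurableMul (SOd d) where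
  measurable_const_mul S := by
    refine (measurable_pi_lambda _ fun i => measurable_pi_lambda _ fun j => ?_).subtype_mk
    simp only [Matrix.mul_apply]
    exact Finset.measurable_sum _ fun k _ => (measurable_SOd_apply k j).const_mul _
  measurable_mul_const S := by
    refine (measurable_pi_lambda _ fun i => measurable_pi_lambda _ fun j => ?_).subtype_mk
    simp only [Matrix.mul_apply]
    exact Finset.measurable_sum _ fun k _ => (measurable_SOd_apply i k).mul_const _

end Pole

section Average

variable {d : ℕ} (μ : Measure (SOd d)) [μ.IsMulRightInvariant]

theorem ae_inner_pole_ne_zero [SFinite μ] (hd : 2 ≤ d) {x : EuclideanSpace ℝ (Fin d)}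
    (hx : ‖x‖ = 1) : ∀ᵐ R ∂μ, ⟪pole R, x⟫ ≠ 0 := by
  have : Nontrivial (EuclideanSpace ℝ (Fin d)) := nontrivial_of_ne x 0 (by rintro rfl; simp at hx)
  have hmeas : MeasurableSet
      {q : SOd d × EuclideanSpace ℝ (Fin d) | ⟪pole q.1, q.2⟫ ≠ 0} :=
    (measurableSet_eq_fun ((measurable_pole.comp measurable_fst).inner measurable_snd)
      measurable_const).compl
  -- Almost every vector `w` avoids the hyperplane of almost every `R`; by invariance the direction
  -- of one such `w` can be rotated onto `x`.
  have hyperplane_null (R : SOd d) : ∀ᵐ w : EuclideanSpace ℝ (Fin d), ⟪pole R, w⟫ ≠ 0 := by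
    have hproper : (ℝ ∙ pole R)ᗮ ≠ ⊤ := by
      rw [Ne, Submodule.orthogonal_eq_top_iff, Submodule.span_singleton_eq_bot]
      exact pole_ne_zero (by omega) R
    filter_upwards [measure_eq_zero_iff_ae_notMem.1
      (Measure.addHaar_submodule volume _ hproper)] with w hw
    rwa [SetLike.mem_coe, Submodule.mem_orthogonal_singleton_iff_inner_right] at hw
  obtain ⟨w, hw, hw₀⟩ := (((Measure.ae_ae_comm hmeas).1 (ae_of_all μ hyperplane_null)).and
    (Measure.ae_ne volume 0)).exists
  obtain ⟨S, hS⟩ := exists_rot_eq hd hx (norm_smul_inv_norm (𝕜 := ℝ) hw₀)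
  have hmeas_x : MeasurableSet {R : SOd d | ⟪pole R, x⟫ ≠ 0} :=
    (measurableSet_eq_fun (measurable_pole.inner measurable_const) measurable_const).compl
  rw [← map_mul_right_eq_self μ S, ae_map_iff (measurable_mul_const S).aemeasurable hmeas_x]
  filter_upwards [hw] with R hR
  rw [inner_pole_mul, hS, inner_smul_right]
  exact mul_ne_zero (by simpa using hw₀) hR

theorem measure_separates_pole [IsProbabilityMeasure μ] (hd : 2 ≤ d)
    {x y : EuclideanSpace ℝ (Fin d)} (hx : ‖x‖ = 1) (hy : ‖y‖ = 1) :
    μ {R | Separates (pole R) x y} = ENNReal.ofReal (InnerProductGeometry.angle x y / π) := by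
  set θ := InnerProductGeometry.angle x y
  have hθ₀ : 0 ≤ θ := InnerProductGeometry.angle_nonneg x y
  have hθπ : θ ≤ π := InnerProductGeometry.angle_le_pi x y
  obtain ⟨v, hv, hxv, hy_arc⟩ := exists_eq_arc_angle (by rwa [finrank_euclideanSpace_fin]) hx hy
  let A (φ : ℝ) : Set (SOd d) := {R | Separates (pole R) (arc x v φ) (arc x v (θ + φ))}
  have hA (φ : ℝ) : μ (A φ) = μ {R | Separates (pole R) x y} := by
    obtain ⟨S, hS⟩ := exists_rot_arc_eq hx hv hxv φ
    have hSx : rot S x = arc x v φ := by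
      conv_lhs => rw [← arc_zero x v, hS, zero_add]
    have hSy : rot S y = arc x v (θ + φ) := by rw [hy_arc, hS]
    rw [← measure_preimage_mul_right μ S {R | Separates (pole R) x y}]
    simp only [Set.preimage_ofPred_eq, separates_pole_mul, hSx, hSy, A]
  have hmeas : MeasurableSet {q : ℝ × SOd d | q.2 ∈ A q.1} :=
    measurableSet_separates (measurable_pole.comp measurable_snd)
      ((measurable_arc x v).comp measurable_fst)
      ((measurable_arc x v).comp (measurable_fst.const_add θ))
  have hdouble : ENNReal.ofReal π * μ {R | Separates (pole R) x y} = ENNReal.ofReal θ := calc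
    ENNReal.ofReal π * μ {R | Separates (pole R) x y}
      = ∫⁻ φ in Set.Ioc 0 π, μ (A φ) := by
        simp only [hA, setLIntegral_const, Real.volume_Ioc, sub_zero, mul_comm]
    _ = ((volume.restrict (Set.Ioc 0 π)).prod μ) {q | q.2 ∈ A q.1} :=
        (Measure.prod_apply hmeas).symm
    _ = ∫⁻ R, volume.restrict (Set.Ioc 0 π) {φ | R ∈ A φ} ∂μ := Measure.prod_apply_symm hmeas
    _ = ∫⁻ _, ENNReal.ofReal θ ∂μ := by
        refine lintegral_congr_ae ?_
        filter_upwards [ae_inner_pole_ne_zero μ hd hx] with R hR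
        rw [← volume_separates_arc hR v hθ₀ hθπ]
        exact Measure.restrict_apply (measurable_prodMk_right hmeas)
    _ = ENNReal.ofReal θ := by rw [lintegral_const, measure_univ, mul_one]
  rw [ENNReal.ofReal_div_of_pos pi_pos, ← hdouble, mul_comm,
    ENNReal.mul_div_cancel_right (by simpa using pi_pos) ENNReal.ofReal_ne_top]

theorem lintegral_norm_FR_sub_FR [IsProbabilityMeasure μ] (hd : 2 ≤ d)
    {x y : EuclideanSpace ℝ (Fin d)} (hx : ‖x‖ = 1) (hy : ‖y‖ = 1) :
    ∫⁻ R, ENNReal.ofReal ‖FR R x - FR R y‖ ∂μ =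
      ENNReal.ofReal ((1 - InnerProductGeometry.angle x y / π) * ‖x - y‖ +
        InnerProductGeometry.angle x y / π * ‖x + y‖) := by
  set t := InnerProductGeometry.angle x y / π
  have ht₀ : 0 ≤ t := div_nonneg (InnerProductGeometry.angle_nonneg x y) pi_pos.le
  have ht₁ : t ≤ 1 := div_le_one_of_le₀ (InnerProductGeometry.angle_le_pi x y) pi_pos.le
  have hmeas : MeasurableSet {R : SOd d | Separates (pole R) x y} :=
    measurableSet_separates measurable_pole measurable_const measurable_const
  have hseparated : ∫⁻ R in {R | Separates (pole R) x y}, ENNReal.ofReal ‖FR R x - FR R y‖ ∂μ =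
      ENNReal.ofReal (t * ‖x + y‖) := by
    rw [setLIntegral_congr_fun (g := fun _ => ENNReal.ofReal ‖x + y‖) hmeas fun R hR => by
        simp only [FR_eq_hemisphereFlip, norm_hemisphereFlip_sub_of_separates hR],
      setLIntegral_const, measure_separates_pole μ hd hx hy, ENNReal.ofReal_mul ht₀, mul_comm]
  have hnot_separated : ∫⁻ R in {R | Separates (pole R) x y}ᶜ,
      ENNReal.ofReal ‖FR R x - FR R y‖ ∂μ = ENNReal.ofReal ((1 - t) * ‖x - y‖) := by
    have hae : ∀ᵐ R ∂μ, R ∈ {R | Separates (pole R) x y}ᶜ →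
        ENNReal.ofReal ‖FR R x - FR R y‖ = ENNReal.ofReal ‖x - y‖ := by
      filter_upwards [ae_inner_pole_ne_zero μ hd hx, ae_inner_pole_ne_zero μ hd hy]
        with R hRx hRy hR
      rw [FR_eq_hemisphereFlip, FR_eq_hemisphereFlip,
        norm_hemisphereFlip_sub_of_not_separates hRx hRy hR]
    rw [setLIntegral_congr_fun_ae hmeas.compl hae, setLIntegral_const, prob_compl_eq_one_sub hmeas,
      measure_separates_pole μ hd hx hy, ← ENNReal.ofReal_one, ← ENNReal.ofReal_sub _ ht₀,
      ENNReal.ofReal_mul (sub_nonneg.2 ht₁), mul_comm]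
  rw [← lintegral_add_compl _ hmeas, hseparated, hnot_separated, add_comm,
    ← ENNReal.ofReal_add (mul_nonneg (sub_nonneg.2 ht₁) (norm_nonneg _))
      (mul_nonneg ht₀ (norm_nonneg _))]

end Average

section Tensor

variable {d : ℕ}

theorem frobNorm_nonneg (A : Fin d → Fin d → ℝ) : 0 ≤ frobNorm A := sqrt_nonneg _

theorem sq_frobNorm_outer_self_sub (x y : EuclideanSpace ℝ (Fin d)) :
    frobNorm (outer x x - outer y y) ^ 2 = ‖x‖ ^ 4 + ‖y‖ ^ 4 - 2 * ⟪x, y⟫ ^ 2 := by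
  rw [frobNorm, sq_sqrt (by positivity)]
  have hmul (a b : EuclideanSpace ℝ (Fin d)) :
      ∑ i, ∑ j, (a i * b i) * (a j * b j) = ⟪a, b⟫ ^ 2 := by
    rw [← Finset.sum_mul_sum, ← sq, ← dotProduct_eq_inner, dotProduct]
  calc ∑ i, ∑ j, (outer x x - outer y y) i j ^ 2
      = ∑ i, ∑ j, ((x i * x i) * (x j * x j) + (y i * y i) * (y j * y j) -
          ((x i * y i) * (x j * y j) + (x i * y i) * (x j * y j))) := by
        refine Finset.sum_congr rfl fun i _ => Finset.sum_congr rfl fun j _ => ?_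
        simp only [Pi.sub_apply, outer]
        ring
    _ = ‖x‖ ^ 4 + ‖y‖ ^ 4 - 2 * ⟪x, y⟫ ^ 2 := by
        simp only [Finset.sum_add_distrib, Finset.sum_sub_distrib, hmul,
          real_inner_self_eq_norm_sq]
        ring

theorem frobNorm_outer_self_sub {x y : EuclideanSpace ℝ (Fin d)} (hx : ‖x‖ = 1) (hy : ‖y‖ = 1) :
    1 / √2 * frobNorm (outer x x - outer y y) = sin (InnerProductGeometry.angle x y) := by
  rw [← sq_eq_sq₀ (mul_nonneg (by positivity) (frobNorm_nonneg _))
    (InnerProductGeometry.sin_angle_nonneg x y), mul_pow, sq_frobNorm_outer_self_sub,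
    ← InnerProductGeometry.cos_angle_mul_norm_mul_norm, hx, hy, div_pow, sq_sqrt zero_le_two,
    sin_sq]
  ring

end Tensor

theorem lintegral_norm_FR_sub_FR_le {d : ℕ} (hd : 2 ≤ d) (μ : Measure (SOd d))
    [IsProbabilityMeasure μ] [μ.IsMulRightInvariant] {x y : EuclideanSpace ℝ (Fin d)}
    (hx : ‖x‖ = 1) (hy : ‖y‖ = 1) :
    ∫⁻ R, ENNReal.ofReal ‖FR R x - FR R y‖ ∂μ ≤
      ENNReal.ofReal (1 + 2 / π) *
        ENNReal.ofReal (1 / √2 * frobNorm (outer x x - outer y y)) := by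
  rw [lintegral_norm_FR_sub_FR μ hd hx hy, norm_sub_eq_two_mul_sin_half_angle hx hy,
    norm_add_eq_two_mul_cos_half_angle hx hy, frobNorm_outer_self_sub hx hy,
    ← ENNReal.ofReal_mul (by positivity)]
  exact ENNReal.ofReal_le_ofReal (half_angle_average_le (InnerProductGeometry.angle_nonneg x y)
    (InnerProductGeometry.angle_le_pi x y))

theorem lintegral_lintegral_lintegral_le_const_mul {α X Y : Type*} [MeasurableSpace α]
    [MeasurableSpace X] [MeasurableSpace Y] {μ : Measure α} {ν : Measure X} {η : Measure Y}
    [SFinite μ] [SFinite ν] [SFinite η] {f : α → X → Y → ℝ≥0∞} {g : X → Y → ℝ≥0∞} {C : ℝ≥0∞}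
    (hf : Measurable fun q : (α × X) × Y => f q.1.1 q.1.2 q.2) (hC : C ≠ ∞)
    (hfg : ∀ x y, ∫⁻ a, f a x y ∂μ ≤ C * g x y) :
    ∫⁻ a, ∫⁻ x, ∫⁻ y, f a x y ∂η ∂ν ∂μ ≤ C * ∫⁻ x, ∫⁻ y, g x y ∂η ∂ν := by
  have hslice (x : X) : Measurable fun q : α × Y => f q.1 x q.2 :=
    hf.comp ((measurable_fst.prodMk measurable_const).prodMk measurable_snd)
  have hinner : Measurable fun q : α × X => ∫⁻ y, f q.1 q.2 y ∂η := hf.lintegral_prod_right'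
  calc ∫⁻ a, ∫⁻ x, ∫⁻ y, f a x y ∂η ∂ν ∂μ
      = ∫⁻ x, ∫⁻ a, ∫⁻ y, f a x y ∂η ∂μ ∂ν := lintegral_lintegral_swap hinner.aemeasurable
    _ = ∫⁻ x, ∫⁻ y, ∫⁻ a, f a x y ∂μ ∂η ∂ν :=
        lintegral_congr fun x => lintegral_lintegral_swap (hslice x).aemeasurable
    _ ≤ ∫⁻ x, ∫⁻ y, C * g x y ∂η ∂ν :=
        lintegral_mono fun x => lintegral_mono fun y => hfg x y
    _ = C * ∫⁻ x, ∫⁻ y, g x y ∂η ∂ν := by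
        simp only [lintegral_const_mul' _ _ hC]

theorem averaging_inequality_euclidean_general {d : ℕ} (hd : 2 ≤ d) (μ : Measure (SOd d))
    [IsProbabilityMeasure μ] [μ.IsMulRightInvariant] {X : Type*} [MeasurableSpace X]
    (ν : Measure X) [SFinite ν] {n : X → EuclideanSpace ℝ (Fin d)} (hn : Measurable n)
    (hn_unit : ∀ x, ‖n x‖ = 1) {K : X → X → ℝ≥0∞} (hK : Measurable (Function.uncurry K)) :
    ∫⁻ R, ∫⁻ x, ∫⁻ y, ENNReal.ofReal ‖FR R (n x) - FR R (n y)‖ * K x y ∂ν ∂ν ∂μ ≤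
      ENNReal.ofReal (1 + 2 / π) * ∫⁻ x, ∫⁻ y, ENNReal.ofReal
        (1 / √2 * frobNorm (outer (n x) (n x) - outer (n y) (n y))) * K x y ∂ν ∂ν := by
  have hFR : Measurable fun q : SOd d × X => FR q.1 (n q.2) := by
    simp only [FR_eq_hemisphereFlip]
    exact measurable_hemisphereFlip.comp
      ((measurable_pole.comp measurable_fst).prodMk (hn.comp measurable_snd))
  have hFR_sub : Measurable fun q : (SOd d × X) × X => FR q.1.1 (n q.1.2) - FR q.1.1 (n q.2) :=
    (hFR.comp measurable_fst).sub
      (hFR.comp ((measurable_fst.comp measurable_fst).prodMk measurable_snd))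
  have hK' : Measurable fun q : (SOd d × X) × X => K q.1.2 q.2 :=
    hK.comp ((measurable_snd.comp measurable_fst).prodMk measurable_snd)
  refine lintegral_lintegral_lintegral_le_const_mul (hFR_sub.norm.ennreal_ofReal.mul hK')
    ENNReal.ofReal_ne_top fun x y => ?_
  have hFR_xy : Measurable fun R => ENNReal.ofReal ‖FR R (n x) - FR R (n y)‖ :=
    (hFR_sub.comp
      ((measurable_id.prodMk measurable_const).prodMk measurable_const)).norm.ennreal_ofReal
  rw [lintegral_mul_const _ hFR_xy, ← mul_assoc]
  gcongr
  exact lintegral_norm_FR_sub_FR_le hd μ (hn_unit x) (hn_unit y)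

theorem ofReal_div_mul {a : ℝ} (ha : 0 ≤ a) (b c : ℝ) :
    ENNReal.ofReal (a / b * c) = ENNReal.ofReal a * ENNReal.ofReal (c / b) := by
  rw [← ENNReal.ofReal_mul ha, div_mul_eq_mul_div, mul_div_assoc]

theorem averaging_inequality_euclidean
    (N d : ℕ) (hN : 1 ≤ N) (hd : 2 ≤ d)
    (μ : Measure (SOd d)) [IsProbabilityMeasure μ]
    (hμleft : ∀ R₀ : SOd d, μ.map (fun R => R₀ * R) = μ)
    (hμright : ∀ R₀ : SOd d, μ.map (fun R => R * R₀) = μ)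
    (Ω : Set (EuclideanSpace ℝ (Fin N))) (hΩ : IsOpen Ω)
    (n : EuclideanSpace ℝ (Fin N) → EuclideanSpace ℝ (Fin d))
    (hnmeas : Measurable n) (hnsph : ∀ x, ‖n x‖ = 1)
    (ρ : ℝ → ℝ) (hρmeas : Measurable ρ) (hρnonneg : ∀ r > (0 : ℝ), 0 ≤ ρ r) :
    ∫⁻ R, (∫⁻ x in Ω, ∫⁻ y in Ω, ENNReal.ofReal
        (‖FR R (n x) - FR R (n y)‖ / ‖x - y‖ * ρ ‖x - y‖)) ∂μ ≤
    ENNReal.ofReal (1 + 2 / π) * ∫⁻ x in Ω, ∫⁻ y in Ω, ENNReal.ofReal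
        ((1 / Real.sqrt 2) * frobNorm (outer (n x) (n x) - outer (n y) (n y)) / ‖x - y‖ *
          ρ ‖x - y‖) := by
  have : μ.IsMulRightInvariant := ⟨hμright⟩
  have hK : Measurable fun q : EuclideanSpace ℝ (Fin N) × EuclideanSpace ℝ (Fin N) =>
      ENNReal.ofReal (ρ ‖q.1 - q.2‖ / ‖q.1 - q.2‖) := by fun_prop
  have hQ (x y : EuclideanSpace ℝ (Fin N)) :
      0 ≤ 1 / √2 * frobNorm (outer (n x) (n x) - outer (n y) (n y)) :=
    mul_nonneg (by positivity) (frobNorm_nonneg _)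
  simpa only [ofReal_div_mul (norm_nonneg _), ofReal_div_mul (hQ _ _)] using
    averaging_inequality_euclidean_general hd μ (volume.restrict Ω) hnmeas hnsph
      (K := fun x y => ENNReal.ofReal (ρ ‖x - y‖ / ‖x - y‖)) hK
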